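/- For a single approximate eigenvalue λ̂_1 ∈ ℂ (the case p = 1), the eigenvalue backward error equals η = σ̂_1 / √(Σ_{j=1}^k |f_j(λ̂_1)|²), where σ̂_1 is the smallest singular value of F(λ̂_1) = Σ_{j=1}^k f_j(λ̂_1) F_j. That is: (a) there exist δF_1, …, δF_k ∈ ℂ^{n×n} and a nonzero v ∈ ℂ^n with Σ_j f_j(λ̂_1)(F_j + δF_j) v = 0 and ‖[δF_1, …, δF_k]‖_F = σ̂_1 / √(Σ_j |f_j(λ̂_1)|²); and (b) no such perturbation has smaller norm. -/

import Mathlib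

open Matrix Kronecker BigOperators

noncomputable section

/-- Frobenius norm of a complex matrix. -/
def fnorm {ι κ : Type*} [Fintype ι] [Fintype κ] (A : Matrix ι κ ℂ) : ℝ :=
  Real.sqrt (∑ i, ∑ j, ‖A i j‖ ^ 2)

/-- Euclidean norm of a complex vector. -/
def vnorm {ι : Type*} [Fintype ι] (v : ι → ℂ) : ℝ :=
  Real.sqrt (∑ i, ‖v i‖ ^ 2)

/-- The four Moore–Penrose conditions. -/
def IsMoorePenrose {ι κ : Type*} [Fintype ι] [Fintype κ]
    (A : Matrix ι κ ℂ) (B : Matrix κ ι ℂ) : Prop :=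
  A * B * A = A ∧ B * A * B = B ∧ (A * B)ᴴ = A * B ∧ (B * A)ᴴ = B * A

open scoped Classical in
/-- The Moore–Penrose pseudoinverse (defined by choice; it always exists and is unique). -/
noncomputable def pinv {ι κ : Type*} [Fintype ι] [Fintype κ] (A : Matrix ι κ ℂ) :
    Matrix κ ι ℂ :=
  if h : ∃ B, IsMoorePenrose A B then h.choose else 0

/-- `s` is a singular value of `A`: `s ≥ 0` and `s²` is an eigenvalue of `Aᴴ A`. -/
def IsSingularValue {ι κ : Type*} [Fintype ι] [Fintype κ] (A : Matrix ι κ ℂ) (s : ℝ) : Prop :=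
  0 ≤ s ∧ ∃ w : κ → ℂ, w ≠ 0 ∧ (Aᴴ * A).mulVec w = ((s : ℂ) ^ 2) • w

/-- The smallest nonzero singular value of `A`, i.e. `σ_p̂(A)` where `p̂ = rank A`. -/
noncomputable def sigmaMinPos {ι κ : Type*} [Fintype ι] [Fintype κ] (A : Matrix ι κ ℂ) : ℝ :=
  sInf {s : ℝ | IsSingularValue A s ∧ 0 < s}

/-- The smallest singular value of a square matrix `A`, the minimum of `‖A v‖₂` over
unit vectors `v`. -/
noncomputable def sigmaMinSq {n : ℕ} (A : Matrix (Fin n) (Fin n) ℂ) : ℝ :=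
  sInf {x : ℝ | ∃ w : Fin n → ℂ, vnorm w = 1 ∧ x = vnorm (A.mulVec w)}

/-- The transposed Khatri–Rao product `G ⊙^T W` of `G : p × k` and `W : p × n`:
the `p × kn` matrix whose `i`-th row is `[G i 1 • (row i of W), …, G i k • (row i of W)]`. -/
def krt {p k n : ℕ} (G : Matrix (Fin p) (Fin k) ℂ) (W : Matrix (Fin p) (Fin n) ℂ) :
    Matrix (Fin p) (Fin k × Fin n) ℂ :=
  Matrix.of fun i jl => G i jl.1 * W i jl.2

/-!
Writing `D = [δF₁, …, δFₖ]`, `A = ∑ⱼ gⱼ Fⱼ` and `g = (gⱼ)`, the constraint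
`∑ⱼ gⱼ (Fⱼ + δFⱼ) v = 0` is the single interpolation condition `D (g ⊗ v) = -A v`. By
Cauchy–Schwarz a matrix `D` with `D u = b` has Frobenius norm at least `‖b‖ / ‖u‖`, with
equality for the rank-one matrix `D = b uᴴ / ‖u‖²`. So the cost of making `v` an eigenvector is
`‖A v‖ / (‖g‖ ‖v‖)`, and minimising over `v ≠ 0` gives `σ_min(A) / ‖g‖`.
-/

section UnitSphere

variable {𝕜 E G : Type*} [RCLike 𝕜] [NormedAddCommGroup E] [NormedSpace 𝕜 E]
  [SeminormedAddCommGroup G] [NormedSpace 𝕜 G]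

lemma le_norm_map_div_norm_of_forall_unit {T : E →ₗ[𝕜] G} {s : ℝ}
    (h : ∀ w, ‖w‖ = 1 → s ≤ ‖T w‖) {v : E} (hv : v ≠ 0) : s ≤ ‖T v‖ / ‖v‖ := by
  simpa [norm_smul, div_eq_inv_mul] using h _ (norm_smul_inv_norm (𝕜 := 𝕜) hv)

end UnitSphere

section Frobenius

open WithLp
open scoped Matrix.Norms.Frobenius

variable {𝕜 m n : Type*} [RCLike 𝕜] [Fintype m] [Fintype n]

lemma fnorm_eq_frobenius_norm (A : Matrix m n ℂ) : fnorm A = ‖A‖ := by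
  simp only [fnorm, frobenius_norm_def, Real.sqrt_eq_rpow, Real.rpow_two]

lemma frobenius_norm_vecMulVec {R : Type*} [NormedRing R] [NormMulClass R] (b : m → R)
    (u : n → R) :
    ‖vecMulVec b u‖ = ‖toLp 2 b‖ * ‖toLp 2 u‖ := by
  simp only [frobenius_norm_def, PiLp.norm_eq_of_L2, vecMulVec_apply, norm_mul, mul_pow,
    Real.rpow_two, ← Finset.mul_sum, ← Finset.sum_mul, ← Real.sqrt_eq_rpow]
  exact Real.sqrt_mul (by positivity) _

lemma norm_toLp_vec {α : Type*} [SeminormedAddCommGroup α] (A : Matrix m n α) :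
    ‖toLp 2 (vec A)‖ = ‖A‖ := by
  simp only [PiLp.norm_eq_of_L2, frobenius_norm_def, vec, Fintype.sum_prod_type_right,
    Real.sqrt_eq_rpow, Real.rpow_two]

lemma norm_mulVec_le_frobenius_norm_mul (A : Matrix m n 𝕜) (v : n → 𝕜) :
    ‖toLp 2 (A *ᵥ v)‖ ≤ ‖A‖ * ‖toLp 2 v‖ := by
  simpa only [← replicateCol_mulVec, frobenius_norm_replicateCol] using
    frobenius_norm_mul A (replicateCol Unit v)

lemma isLeast_frobenius_norm_mulVec_eq {u : n → 𝕜} (hu : u ≠ 0) (b : m → 𝕜) :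
    IsLeast {x : ℝ | ∃ D : Matrix m n 𝕜, D *ᵥ u = b ∧ x = ‖D‖} (‖toLp 2 b‖ / ‖toLp 2 u‖) := by
  have hu_pos : 0 < ‖toLp 2 u‖ := by simpa [norm_pos_iff] using hu
  constructor
  · have hu_sq : star u ⬝ᵥ u = (‖toLp 2 u‖ : 𝕜) ^ 2 := by
      rw [dotProduct_comm, ← EuclideanSpace.inner_toLp_toLp, inner_self_eq_norm_sq_to_K]
    refine ⟨((‖toLp 2 u‖ : 𝕜) ^ 2)⁻¹ • vecMulVec b (star u), ?_, ?_⟩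
    · have hu_ne : (‖toLp 2 u‖ : 𝕜) ≠ 0 := by exact_mod_cast hu_pos.ne'
      rw [smul_mulVec, vecMulVec_mulVec, hu_sq, op_smul_eq_smul,
        inv_smul_smul₀ (pow_ne_zero 2 hu_ne)]
    · have hu_star : ‖toLp 2 (star u)‖ = ‖toLp 2 u‖ := by simp [EuclideanSpace.norm_eq]
      rw [norm_smul, frobenius_norm_vecMulVec, hu_star, norm_inv, norm_pow, RCLike.norm_ofReal,
        abs_of_pos hu_pos]
      field_simp
  · rintro _ ⟨D, rfl, rfl⟩
    exact (div_le_iff₀ hu_pos).mpr (norm_mulVec_le_frobenius_norm_mul D u)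

end Frobenius

section BlockRow

variable {ι m n R : Type*}

/-- The block row `[M₁, …, Mₖ]`, whose columns are indexed by the block and the column inside it;
it carries all the perturbations `δFⱼ` at once. -/
def blockRow (M : ι → Matrix m n R) : Matrix m (ι × n) R :=
  of fun i jl => M jl.1 i jl.2

lemma blockRow_surjective : Function.Surjective (blockRow : (ι → Matrix m n R) → _) :=
  fun D => ⟨fun j => of fun i l => D i (j, l), rfl⟩

variable [Fintype ι] [Fintype n]

-- `vec (vecMulVec v g)` is the Kronecker product `g ⊗ v`.
lemma blockRow_mulVec_vec_vecMulVec [CommSemiring R] (M : ι → Matrix m n R) (g : ι → R)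
    (v : n → R) : blockRow M *ᵥ vec (vecMulVec v g) = ∑ j, g j • M j *ᵥ v := by
  ext i
  simp only [blockRow, mulVec, dotProduct, of_apply, vec, vecMulVec_apply, Fintype.sum_prod_type,
    Finset.sum_apply, Pi.smul_apply, smul_eq_mul, Finset.mul_sum]
  exact Finset.sum_congr rfl fun _ _ => Finset.sum_congr rfl fun _ _ => by ring

lemma sum_smul_add_mulVec_eq_zero_iff [CommRing R] (F δF : ι → Matrix m n R) (g : ι → R)
    (v : n → R) :
    ∑ j, g j • (F j + δF j) *ᵥ v = 0 ↔
      blockRow δF *ᵥ vec (vecMulVec v g) = -((∑ j, g j • F j) *ᵥ v) := by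
  simp only [blockRow_mulVec_vec_vecMulVec, add_mulVec, smul_add, Finset.sum_add_distrib,
    sum_mulVec, smul_mulVec]
  rw [add_comm, add_eq_zero_iff_eq_neg]

end BlockRow

section BackwardError

open WithLp
open scoped Matrix.Norms.Frobenius

variable {𝕜 ι m n : Type*} [RCLike 𝕜] [Fintype ι] [Fintype m] [Fintype n]

lemma isLeast_backward_error_eigenpair (F : ι → Matrix m n 𝕜) {g : ι → 𝕜} (hg : g ≠ 0)
    {v : n → 𝕜} (hv : v ≠ 0) :
    IsLeast {x : ℝ | ∃ δF : ι → Matrix m n 𝕜,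
        ∑ j, g j • (F j + δF j) *ᵥ v = 0 ∧ x = ‖blockRow δF‖}
      (‖toLp 2 ((∑ j, g j • F j) *ᵥ v)‖ / (‖toLp 2 v‖ * ‖toLp 2 g‖)) := by
  have h_kron : vec (vecMulVec v g) ≠ 0 := by
    rw [Ne, vec_eq_zero_iff, ← norm_eq_zero, frobenius_norm_vecMulVec]
    simp [hv, hg]
  have h_least := isLeast_frobenius_norm_mulVec_eq h_kron (-((∑ j, g j • F j) *ᵥ v))
  rw [toLp_neg, norm_neg, norm_toLp_vec, frobenius_norm_vecMulVec] at h_least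
  simpa only [sum_smul_add_mulVec_eq_zero_iff, blockRow_surjective.exists] using h_least

theorem backward_error_single_eigenvalue_general (F : ι → Matrix m n 𝕜)
    {g : ι → 𝕜} (hg : g ≠ 0) {s : ℝ} (hs : IsLeast {x : ℝ | ∃ w : n → 𝕜, ‖toLp 2 w‖ = 1 ∧
      x = ‖toLp 2 ((∑ j, g j • F j) *ᵥ w)‖} s) :
    IsLeast {x : ℝ | ∃ (δF : ι → Matrix m n 𝕜) (v : n → 𝕜), v ≠ 0 ∧
        ∑ j, g j • (F j + δF j) *ᵥ v = 0 ∧ x = ‖blockRow δF‖}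
      (s / ‖toLp 2 g‖) := by
  classical
  obtain ⟨⟨w, hw, hsw⟩, hmin⟩ := hs
  constructor
  · have hw_ne : w ≠ 0 := by
      rintro rfl
      simp at hw
    obtain ⟨δF, hδF, h_norm⟩ := (isLeast_backward_error_eigenpair F hg hw_ne).1
    exact ⟨δF, w, hw_ne, hδF, by rwa [hw, one_mul, ← hsw] at h_norm⟩
  · rintro x ⟨δF, v, hv, hδF, hx⟩
    have h_ratio : s ≤ ‖toLp 2 ((∑ j, g j • F j) *ᵥ v)‖ / ‖toLp 2 v‖ :=
      le_norm_map_div_norm_of_forall_unit (T := toLpLin 2 2 (∑ j, g j • F j))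
        (fun w hw => hmin ⟨ofLp w, hw, rfl⟩) ((toLp_eq_zero 2).not.mpr hv)
    calc s / ‖toLp 2 g‖
        ≤ ‖toLp 2 ((∑ j, g j • F j) *ᵥ v)‖ / ‖toLp 2 v‖ / ‖toLp 2 g‖ := by gcongr
      _ = ‖toLp 2 ((∑ j, g j • F j) *ᵥ v)‖ / (‖toLp 2 v‖ * ‖toLp 2 g‖) := div_div _ _ _
      _ ≤ x := (isLeast_backward_error_eigenpair F hg hv).2 ⟨δF, hδF, hx⟩

end BackwardError

section SmallestSingularValue

open WithLp

lemma vnorm_eq_norm_toLp {ι : Type*} [Fintype ι] (v : ι → ℂ) : vnorm v = ‖toLp 2 v‖ :=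
  (EuclideanSpace.norm_eq _).symm

lemma isLeast_sInf_norm_mulVec_unit {𝕜 m n : Type*} [RCLike 𝕜] [Fintype m] [Fintype n]
    [Nonempty n] (A : Matrix m n 𝕜) :
    IsLeast {x : ℝ | ∃ w : n → 𝕜, ‖toLp 2 w‖ = 1 ∧ x = ‖toLp 2 (A *ᵥ w)‖}
      (sInf {x : ℝ | ∃ w : n → 𝕜, ‖toLp 2 w‖ = 1 ∧ x = ‖toLp 2 (A *ᵥ w)‖}) := by
  classical
  have h_image : {x : ℝ | ∃ w : n → 𝕜, ‖toLp 2 w‖ = 1 ∧ x = ‖toLp 2 (A *ᵥ w)‖} =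
      (fun w => ‖toLpLin 2 2 A w‖) '' Metric.sphere 0 1 := by
    ext x
    simp [(toLp_surjective 2).exists, eq_comm]
  have h_cont : Continuous fun w => ‖toLpLin 2 2 A w‖ :=
    (toLpLin 2 2 A).continuous_of_finiteDimensional.norm
  have h_nonempty : (Metric.sphere (0 : EuclideanSpace 𝕜 n) 1).Nonempty :=
    Set.nonempty_coe_sort.mp (NormedSpace.sphere_nonempty_rclike 𝕜 zero_le_one)
  rw [h_image]
  exact ((isCompact_sphere 0 1).image h_cont).isLeast_sInf (h_nonempty.image _)

lemma isLeast_sigmaMinSq {n : ℕ} (hn : 0 < n) (A : Matrix (Fin n) (Fin n) ℂ) :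
    IsLeast {x : ℝ | ∃ w : Fin n → ℂ, ‖toLp 2 w‖ = 1 ∧ x = ‖toLp 2 (A *ᵥ w)‖}
      (sigmaMinSq A) := by
  have : NeZero n := ⟨hn.ne'⟩
  simpa only [sigmaMinSq, vnorm_eq_norm_toLp] using isLeast_sInf_norm_mulVec_unit A

end SmallestSingularValue

/-- For a single approximate eigenvalue `λ̂₁` (the case `p = 1`), the eigenvalue backward
error equals `σ̂₁ / √(∑ⱼ |fⱼ(λ̂₁)|²)`, where `σ̂₁` is the smallest singular value of
`F(λ̂₁) = ∑ⱼ fⱼ(λ̂₁) Fⱼ`: the minimum over all perturbations `δFⱼ` and nonzero vectors `v`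
with `∑ⱼ fⱼ(λ̂₁)(Fⱼ + δFⱼ) v = 0` of `‖[δF₁, …, δFₖ]‖_F` is attained and has this value. -/
theorem backward_error_single_eigenvalue (n k : ℕ) (hn : 0 < n)
    (F : Fin k → Matrix (Fin n) (Fin n) ℂ)
    (f : Fin k → ℂ → ℂ) (lam1 : ℂ)
    (hf : ∃ j, f j lam1 ≠ 0)
    (sig1 : ℝ) (hsig : sig1 = sigmaMinSq (∑ j, f j lam1 • F j)) :
    IsLeast
      {x : ℝ | ∃ (δF : Fin k → Matrix (Fin n) (Fin n) ℂ) (v : Fin n → ℂ), v ≠ 0 ∧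
        (∑ j, f j lam1 • ((F j + δF j).mulVec v)) = 0 ∧
        x = fnorm (Matrix.of fun (m : Fin n) (jl : Fin k × Fin n) => δF jl.1 m jl.2)}
      (sig1 / Real.sqrt (∑ j, ‖f j lam1‖ ^ 2)) := by
  subst hsig
  have hg : (fun j => f j lam1) ≠ 0 := Function.ne_iff.mpr hf
  simpa only [fnorm_eq_frobenius_norm, EuclideanSpace.norm_eq, blockRow] using
    backward_error_single_eigenvalue_general F hg (isLeast_sigmaMinSq hn _)
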